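/- Let G be a finite group and α an automorphism of G with α³ = id. If |{x ∈ G : x x^α x^{α²} = 1}| > (15/16)|G|, then x x^α x^{α²} = 1 for all x ∈ G. Consequently c₃ ≤ 15/16 < 1, where c₃ = sup({|X_{3,φ}(H)|/|H| : H finite, φ ∈ Aut(H), φ³ = id} \ {1}). -/

import Mathlib

namespace CThree

open scoped commutatorElement

universe u

/-- If `c`, `x c`, `x⁻¹ c` all have cube `1`, then `x` commutes with its `c`-conjugate. -/
lemma good_of_cubes {H : Type*} [Group H] {x c : H} (h1 : c ^ 3 = 1) (h2 : (x * c) ^ 3 = 1)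
    (h3 : (x⁻¹ * c) ^ 3 = 1) :
    Commute x (c * x * c⁻¹) ∧ x * (c * x * c⁻¹) * (c⁻¹ * x * c) = 1 := by
  have hc : c⁻¹ = c * c := by
    rw [inv_eq_iff_mul_eq_one, ← h1]; simp only [pow_succ, pow_zero, one_mul, mul_assoc]
  have key : ∀ y : H, (y * c) ^ 3 = 1 → y * (c * y * c⁻¹) * (c⁻¹ * y * c) = 1 := by
    intro y hy
    have : y * (c * y * c⁻¹) * (c⁻¹ * y * c) = (y * c) ^ 3 := by
      have e : c⁻¹ * c⁻¹ = c := by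
        have : c⁻¹ * c⁻¹ = (c * c)⁻¹ := by group
        rw [this, ← hc, inv_inv]
      calc y * (c * y * c⁻¹) * (c⁻¹ * y * c) = y * c * y * (c⁻¹ * c⁻¹) * y * c := by group
        _ = (y * c) ^ 3 := by rw [e]; simp only [pow_succ, pow_zero, one_mul, mul_assoc]
    rw [this, hy]
  have k1 := key x h2
  have k2 := key x⁻¹ h3
  refine ⟨?_, k1⟩
  have e1 : c⁻¹ * x * c = (x * (c * x * c⁻¹))⁻¹ := eq_inv_of_mul_eq_one_right k1
  have e2 : c⁻¹ * x⁻¹ * c = (x⁻¹ * (c * x⁻¹ * c⁻¹))⁻¹ := eq_inv_of_mul_eq_one_right k2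
  have e3 : c⁻¹ * x * c = (c⁻¹ * x⁻¹ * c)⁻¹ := by group
  rw [e2, inv_inv] at e3
  rw [e3] at e1
  have e4 : x⁻¹ * (c * x⁻¹ * c⁻¹) = ((c * x * c⁻¹) * x)⁻¹ := by group
  rw [e4] at e1
  exact (inv_injective e1).symm

lemma conj_commute {H : Type*} [Group H] {a b : H} (g : H)
    (h : Commute (g * a * g⁻¹) (g * b * g⁻¹)) : Commute a b := by
  have h' : g * a * g⁻¹ * (g * b * g⁻¹) = g * b * g⁻¹ * (g * a * g⁻¹) := h
  have e1 : g * a * g⁻¹ * (g * b * g⁻¹) = g * (a * b) * g⁻¹ := by group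
  have e2 : g * b * g⁻¹ * (g * a * g⁻¹) = g * (b * a) * g⁻¹ := by group
  rw [e1, e2] at h'
  exact mul_left_cancel (mul_right_cancel h')

lemma commute_of_prod {H : Type*} [Group H] {x y p q : H} (h : x * p * q = 1)
    (hp : Commute y p) (hq : Commute y q) : Commute y x := by
  have : x = (p * q)⁻¹ := by
    rw [mul_assoc] at h; exact eq_inv_of_mul_eq_one_left h
  rw [this]
  exact (hp.mul_right hq).inv_right

/-- The selection principle: any at most sixteen injective self-maps of the coset can be
made to take cube-trivial values simultaneously. -/
def Pick {H Q : Type*} [Group H] [CommGroup Q] (π : H →* Q) (t : H) : Prop :=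
  ∀ l : List (H → H), l.length ≤ 16 →
    (∀ F ∈ l, Function.Injective F ∧ ∀ c, π c = π t → π (F c) = π t) →
    ∃ c, π c = π t ∧ ∀ F ∈ l, (F c) ^ 3 = 1

section
variable {H Q : Type*} [Group H] [CommGroup Q] {π : H →* Q} {t : H}

lemma step1 (hP : Pick π t) {x g : H} (hx : π x = 1) (hg : π g = 1) :
    Commute x (g * x * g⁻¹) := by
  obtain ⟨c, -, hc⟩ := hP
    [fun c => c, fun c => x * c, fun c => x⁻¹ * c,
     fun c => g⁻¹ * c, fun c => x * (g⁻¹ * c), fun c => x⁻¹ * (g⁻¹ * c),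
     fun c => c * g, fun c => x * (c * g), fun c => x⁻¹ * (c * g)] (by simp) (by
      simp only [List.mem_cons, List.not_mem_nil, or_false, forall_eq_or_imp, forall_eq]
      refine ⟨?_, ?_, ?_, ?_, ?_, ?_, ?_, ?_, ?_⟩ <;>
      · refine ⟨fun a b hab => by simpa using hab, fun c hc => by simp [hx, hg, hc]⟩)
  simp only [List.mem_cons, List.not_mem_nil, or_false, forall_eq_or_imp, forall_eq] at hc
  obtain ⟨c1, c2, c3, c4, c5, c6, c7, c8, c9⟩ := hc
  obtain ⟨-, h1⟩ := good_of_cubes c1 c2 c3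
  obtain ⟨h2, -⟩ := good_of_cubes c4 c5 c6
  obtain ⟨h3, -⟩ := good_of_cubes c7 c8 c9
  refine (commute_of_prod h1 ?_ ?_).symm
  · apply conj_commute g⁻¹
    convert h2 using 1 <;> group
  · apply conj_commute c
    convert h3.symm using 1 <;> group

lemma step2 (hP : Pick π t) (ht : π t ^ 3 = 1) {x c : H} (hx : π x = 1) (hc : π c = π t) :
    Commute x (c * x * c⁻¹) := by
  have ht' : (π t)⁻¹ * (π t)⁻¹ = π t := by
    have : (π t)⁻¹ * (π t)⁻¹ = π t * (π t ^ 3)⁻¹ := by group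
    rw [this, ht]; simp
  obtain ⟨d, hdt, hd⟩ := hP
    [fun c => c, fun c => x * c, fun c => x⁻¹ * c,
     fun d => c⁻¹ * d⁻¹, fun d => x * (c⁻¹ * d⁻¹), fun d => x⁻¹ * (c⁻¹ * d⁻¹)] (by simp) (by
      simp only [List.mem_cons, List.not_mem_nil, or_false, forall_eq_or_imp, forall_eq]
      refine ⟨?_, ?_, ?_, ?_, ?_, ?_⟩ <;>
      · refine ⟨fun a b hab => by simpa using hab, fun d hd => by simp [hx, hc, hd, ht']⟩)
  simp only [List.mem_cons, List.not_mem_nil, or_false, forall_eq_or_imp, forall_eq] at hd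
  obtain ⟨c1, c2, c3, c4, c5, c6⟩ := hd
  obtain ⟨-, h1⟩ := good_of_cubes c1 c2 c3
  obtain ⟨h2, -⟩ := good_of_cubes c4 c5 c6
  refine (commute_of_prod h1 ?_ ?_).symm
  · apply conj_commute d⁻¹
    have := step1 hP hx (g := d⁻¹ * c) (by simp [hc, hdt])
    convert this.symm using 1 <;> group
  · apply conj_commute c⁻¹
    convert h2 using 1 <;> group

lemma step3 (hP : Pick π t) (ht : π t ^ 3 = 1)
    (hcov : ∀ g, π g = 1 ∨ π g = π t ∨ π g⁻¹ = π t) {x : H} (hx : π x = 1) (g : H) :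
    Commute x (g * x * g⁻¹) := by
  rcases hcov g with h | h | h
  · exact step1 hP hx h
  · exact step2 hP ht hx h
  · apply conj_commute g⁻¹
    convert (step2 hP ht hx h).symm using 1 ; group

end

/-- The normal closure of an element commuting with its conjugates, as a module:
an additive group `M` with an action of `H`, embedded in `H` with action by conjugation. -/
structure Md {H : Type*} [Group H] (x : H) (M : Type*) [AddCommGroup M] where
  ρ : H →* AddMonoid.End M
  ι : M → H
  v : M
  inj : Function.Injective ι
  add : ∀ a b, ι (a + b) = ι a * ι b
  zero : ι 0 = 1
  neg : ∀ a, ι (-a) = (ι a)⁻¹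
  act : ∀ g a, ι (ρ g a) = g * ι a * g⁻¹
  gen : ι v = x
  mem : ∀ a, ι a ∈ Subgroup.normalClosure {x}

lemma exists_module {H : Type u} [Group H] (x : H) (hx : ∀ g, Commute x (g * x * g⁻¹)) :
    ∃ (M : Type u) (_ : AddCommGroup M), Nonempty (Md x M) := by
  have hcomm : ∀ a ∈ Group.conjugatesOfSet {x}, ∀ b ∈ Group.conjugatesOfSet {x},
      a * b = b * a := by
    intro a ha b hb
    simp only [Group.mem_conjugatesOfSet_iff, Set.mem_singleton_iff, exists_eq_left,
      isConj_iff] at ha hb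
    obtain ⟨g, rfl⟩ := ha
    obtain ⟨h, rfl⟩ := hb
    have := hx (g⁻¹ * h)
    apply conj_commute g⁻¹
    convert this using 1 <;> group
  let A : Subgroup H := Subgroup.normalClosure {x}
  have hA : ∀ a b : A, a * b = b * a := by
    intro a b
    have := Subgroup.isMulCommutative_closure hcomm
    exact mul_comm' (M := Subgroup.closure (Group.conjugatesOfSet {x})) a b
  let : CommGroup A := { (inferInstance : Group A) with mul_comm := hA }
  have : A.Normal := Subgroup.normalClosure_normal
  let ρ : H →* AddMonoid.End (Additive A) :=
    { toFun := fun g => MonoidHom.toAdditive (MulAut.conjNormal (H := A) g).toMonoidHom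
      map_one' := by ext a; simp; rfl
      map_mul' := by intro g h; ext a; simp; rfl }
  exact ⟨Additive A, inferInstance, ⟨
    { ρ := ρ
      ι := fun a => ((Additive.toMul a : A) : H)
      v := Additive.ofMul ⟨x, Subgroup.subset_normalClosure rfl⟩
      inj := fun a b h => Additive.toMul.injective (Subtype.ext h)
      add := fun a b => rfl
      zero := rfl
      neg := fun a => rfl
      act := fun g a => rfl
      gen := rfl
      mem := fun a => (Additive.toMul a).2 }⟩⟩

lemma anti {R : Type*} [Ring R] {a b : R} (ha : a * a = 0) (hb : b * b = 0)
    (hab : (a + b + a * b) * (a + b + a * b) = 0) :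
    a * b = - (b * a) ∧ a * b * a = 0 := by
  have e : (a + b + a * b) * (a + b + a * b) =
      a * a + a * b + (a * a) * b + b * a + b * b + b * a * b + a * b * a + a * (b * b)
      + a * b * a * b := by noncomm_ring
  rw [e] at hab
  simp only [ha, hb, zero_mul, mul_zero, add_zero, zero_add] at hab
  have h1 : a * b * a + a * b * a * b = 0 := by
    have := congrArg (a * ·) hab
    have e2 : a * (a * b + b * a + b * a * b + a * b * a + a * b * a * b)
      = (a * a) * b + a * b * a + a * b * a * b + (a * a) * b * a + (a * a) * b * a * b := by
        noncomm_ring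
    simp only [e2, ha, mul_zero, zero_mul, zero_add, add_zero] at this
    exact this
  have h2 : a * b * a = 0 := by
    have e3 : a * b * a = (a * b * a + a * b * a * b) * (1 - b) + a * b * a * (b * b) := by
      noncomm_ring
    rw [e3, h1, hb]; simp
  have h3 : b * a * b = 0 := by
    rw [h2] at hab
    simp only [zero_mul, add_zero] at hab
    have := congrArg (b * ·) hab
    have e2 : b * (a * b + b * a + b * a * b) = b * a * b + (b * b) * a + (b * b) * a * b := by
      noncomm_ring
    simp only [e2, hb, zero_mul, add_zero, mul_zero] at this
    exact this
  refine ⟨?_, h2⟩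
  rw [h2, h3] at hab
  simp only [zero_mul, add_zero] at hab
  exact eq_neg_of_add_eq_zero_left hab

section
variable {H Q : Type*} [Group H] [CommGroup Q] {π : H →* Q}
variable {x : H} {M : Type*} [AddCommGroup M]

lemma Md.mem_ker (m : Md x M) (hx : π x = 1) (u : M) : π (m.ι u) = 1 := by
  have h : Subgroup.normalClosure {x} ≤ π.ker :=
    Subgroup.normalClosure_le_normal (by simpa using hx)
  exact h (m.mem u)

lemma Md.comm (m : Md x M) (g : H) (u : M) : m.ι ((m.ρ g - 1) u) = ⁅g, m.ι u⁆ := by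
  have : (m.ρ g - 1) u = m.ρ g u + -u := by
    rw [← sub_eq_add_neg]; rfl
  rw [this, m.add, m.neg, m.act, commutatorElement_def]

lemma Md.sq (m : Md x M) (_ : π x = 1) (hE : ∀ y, π y = 1 → ∀ g, Commute y (g * y * g⁻¹))
    {n : H} (hn : π n = 1) : (m.ρ n - 1) * (m.ρ n - 1) = 0 := by
  ext u
  apply m.inj
  change m.ι ((m.ρ n - 1) ((m.ρ n - 1) u)) = m.ι 0
  rw [m.comm, m.comm, m.zero, commutatorElement_eq_one_iff_commute]
  have h := hE n hn (m.ι u)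
  have e : ⁅n, m.ι u⁆ = n * (m.ι u * n * (m.ι u)⁻¹)⁻¹ := by
    rw [commutatorElement_def]; group
  rw [e]
  exact (Commute.refl n).mul_right h.inv_right

lemma Md.anti (m : Md x M) (hx : π x = 1)
    (hE : ∀ y, π y = 1 → ∀ g, Commute y (g * y * g⁻¹))
    {g h : H} (hg : π g = 1) (hh : π h = 1) :
    (m.ρ g - 1) * (m.ρ h - 1) = - ((m.ρ h - 1) * (m.ρ g - 1)) ∧
    (m.ρ g - 1) * (m.ρ h - 1) * (m.ρ g - 1) = 0 := by
  apply CThree.anti (m.sq hx hE hg) (m.sq hx hE hh)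
  have e : m.ρ g - 1 + (m.ρ h - 1) + (m.ρ g - 1) * (m.ρ h - 1) = m.ρ (g * h) - 1 := by
    rw [map_mul]; noncomm_ring
  rw [e]
  exact m.sq hx hE (by simp [hg, hh])

lemma Md.inv (m : Md x M) (hx : π x = 1)
    (hE : ∀ y, π y = 1 → ∀ g, Commute y (g * y * g⁻¹))
    {g : H} (hg : π g = 1) : m.ρ g⁻¹ = 1 - (m.ρ g - 1) := by
  have h1 : m.ρ g⁻¹ * m.ρ g = 1 := by rw [← map_mul]; simp
  have h2 : m.ρ g * (1 - (m.ρ g - 1)) = 1 := by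
    have e : m.ρ g * (1 - (m.ρ g - 1)) = 1 - (m.ρ g - 1) * (m.ρ g - 1) := by noncomm_ring
    rw [e, m.sq hx hE hg, sub_zero]
  exact left_inv_eq_right_inv h1 h2

lemma Md.commutator (m : Md x M) (hx : π x = 1)
    (hE : ∀ y, π y = 1 → ∀ g, Commute y (g * y * g⁻¹))
    {g h : H} (hg : π g = 1) (hh : π h = 1) :
    m.ρ ⁅g, h⁆ - 1 = (m.ρ g - 1) * (m.ρ h - 1) + (m.ρ g - 1) * (m.ρ h - 1) := by
  obtain ⟨h1, h2⟩ := m.anti hx hE hg hh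
  obtain ⟨-, h3⟩ := m.anti hx hE hh hg
  have h4 := m.sq hx hE hg
  have h5 := m.sq hx hE hh
  rw [commutatorElement_def, map_mul, map_mul, map_mul, m.inv hx hE hg, m.inv hx hE hh]
  have ea : m.ρ g = 1 + (m.ρ g - 1) := by abel
  have eb : m.ρ h = 1 + (m.ρ h - 1) := by abel
  generalize m.ρ g - 1 = a at *
  generalize m.ρ h - 1 = b at *
  rw [ea, eb]
  have e : (1 + a) * (1 + b) * (1 - a) * (1 - b) - 1 = a * b - b * a - a * a - b * b
      + a * a * b - a * (b * b) - a * b * a + b * a * b + a * b * a * b := by noncomm_ring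
  have e' : b * a = - (a * b) := by rw [h1, neg_neg]
  rw [e, h2, h3, h4, h5, e']
  simp

end

section
variable {H Q : Type*} [Group H] [CommGroup Q] {π : H →* Q}

lemma triple (hE : ∀ y, π y = 1 → ∀ g, Commute y (g * y * g⁻¹)) {g h x : H}
    (hg : π g = 1) (hh : π h = 1) (hx : π x = 1) : ⁅g, ⁅h, x⁆⁆ ^ 3 = 1 := by
  have L1 : ∀ g h x : H, π g = 1 → π h = 1 → π x = 1 → ⁅g, ⁅h, x⁆⁆ = ⁅h, ⁅g, x⁆⁆⁻¹ := by
    intro g h x hg hh hx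
    obtain ⟨A, _, ⟨m⟩⟩ := exists_module x (hE x hx)
    have e := DFunLike.congr_fun (m.anti hx hE hg hh).1 m.v
    have e' := congrArg m.ι e
    change m.ι ((m.ρ g - 1) ((m.ρ h - 1) m.v)) = m.ι (-((m.ρ h - 1) ((m.ρ g - 1) m.v))) at e'
    rw [m.neg, m.comm, m.comm, m.comm, m.comm, m.gen] at e'
    exact e'
  have L2 : ∀ g u : H, π u = 1 → ⁅g, u⁻¹⁆ = ⁅g, u⁆⁻¹ := by
    intro g u hu
    have h := (hE u hu g).inv_right
    have h' : u * (g * u * g⁻¹)⁻¹ = (g * u * g⁻¹)⁻¹ * u := h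
    rw [commutatorElement_def, commutatorElement_def]
    calc g * u⁻¹ * g⁻¹ * u⁻¹⁻¹ = (g * u * g⁻¹)⁻¹ * u := by group
      _ = u * (g * u * g⁻¹)⁻¹ := h'.symm
      _ = _ := by group
  have L3 : ⁅⁅g, h⁆, x⁆ = ⁅g, ⁅h, x⁆⁆ * ⁅g, ⁅h, x⁆⁆ := by
    obtain ⟨A, _, ⟨m⟩⟩ := exists_module x (hE x hx)
    have e := DFunLike.congr_fun (m.commutator hx hE hg hh) m.v
    have e' := congrArg m.ι e
    change m.ι _ = m.ι ((m.ρ g - 1) ((m.ρ h - 1) m.v) + (m.ρ g - 1) ((m.ρ h - 1) m.v)) at e'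
    rw [m.add, m.comm, m.comm, m.comm, m.gen] at e'
    exact e'
  have e1 : ⁅⁅g, h⁆, x⁆ = ⁅g, ⁅h, x⁆⁆⁻¹ := by
    rw [← commutatorElement_inv x, L1 x g h hx hg hh, ← commutatorElement_inv h x,
      L2 g _ (by simp [commutatorElement_def, hh, hx]), inv_inv]
  rw [e1] at L3
  have : ⁅g, ⁅h, x⁆⁆ ^ 3 = ⁅g, ⁅h, x⁆⁆ * ⁅g, ⁅h, x⁆⁆ * ⁅g, ⁅h, x⁆⁆ := by
    simp only [pow_succ, pow_zero, one_mul]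
  rw [this, ← L3, inv_mul_cancel]

lemma Md.three {x : H} {M : Type*} [AddCommGroup M] (m : Md x M) (hx : π x = 1)
    (hE : ∀ y, π y = 1 → ∀ g, Commute y (g * y * g⁻¹))
    {g h : H} (hg : π g = 1) (hh : π h = 1) (u : M) :
    (3 : ℕ) • ((m.ρ g - 1) * (m.ρ h - 1)) u = 0 := by
  apply m.inj
  change m.ι ((3 : ℕ) • (m.ρ g - 1) ((m.ρ h - 1) u)) = _
  have := triple hE hg hh (m.mem_ker hx u)
  rw [succ_nsmul, succ_nsmul, one_nsmul, m.add, m.add, m.comm, m.comm, m.zero, ← this]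
  simp only [pow_succ, pow_zero, one_mul]

lemma Md.orth {x : H} {M : Type*} [AddCommGroup M] (m : Md x M) (hx : π x = 1)
    (hE : ∀ y, π y = 1 → ∀ g, Commute y (g * y * g⁻¹))
    {g : H} (hg : π g = 1) (t : H) :
    (m.ρ g - 1) * (m.ρ (t * g * t⁻¹) - 1) = 0 := by
  have hh : π (t * g * t⁻¹) = 1 := by simp [hg]
  have h3 := m.three hx hE hg hh
  have hc : (m.ρ g - 1) * (m.ρ (t * g * t⁻¹) - 1) = (m.ρ (t * g * t⁻¹) - 1) * (m.ρ g - 1) := by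
    have := (hE g hg t).map m.ρ
    exact ((this.sub_left (Commute.one_left _)).sub_right (Commute.one_right _))
  have ha := (m.anti hx hE hg hh).1
  rw [← hc] at ha
  ext u
  have h2 := DFunLike.congr_fun ha u
  have h3 := h3 u
  generalize (m.ρ g - 1) * (m.ρ (t * g * t⁻¹) - 1) = F at *
  change F u = - F u at h2
  change F u = 0
  have : F u = (3 : ℕ) • F u - (F u + F u) := by
    rw [succ_nsmul, succ_nsmul, one_nsmul]; abel
  rw [this, h3]
  nth_rewrite 1 [h2]
  simp

/-- The value of `1 + c + c²` on the generator for `c = h t`. -/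
lemma Md.expand {x : H} {M : Type*} [AddCommGroup M] (m : Md x M) (hx : π x = 1)
    (hE : ∀ y, π y = 1 → ∀ g, Commute y (g * y * g⁻¹))
    {h t : H} (hh : π h = 1) (h1 : (h * t) ^ 3 = 1) (h2 : (x * (h * t)) ^ 3 = 1) :
    (1 + m.ρ t + m.ρ t * m.ρ t + (m.ρ h - 1) * m.ρ t
      + ((m.ρ h - 1) + (m.ρ (t * h * t⁻¹) - 1)) * (m.ρ t * m.ρ t)) m.v = 0 := by
  set c := h * t with hc
  have e1 : x * (c * x * c⁻¹) * ((c * c) * x * (c * c)⁻¹) = 1 := by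
    have : x * (c * x * c⁻¹) * ((c * c) * x * (c * c)⁻¹) = (x * c) ^ 3 * (c ^ 3)⁻¹ := by
      simp only [pow_succ, pow_zero, one_mul]; group
    rw [this, h1, h2]; simp
  have e2 : (1 + m.ρ c + m.ρ (c * c)) m.v = 0 := by
    apply m.inj
    change m.ι (m.v + m.ρ c m.v + m.ρ (c * c) m.v) = _
    rw [m.add, m.add, m.act, m.act, m.gen, e1, m.zero]
  rw [← e2]
  congr 1
  have ho := m.orth hx hE hh t
  have e3 : c * c = h * (t * h * t⁻¹) * (t * t) := by rw [hc]; group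
  rw [e3, hc]
  simp only [map_mul m.ρ h, map_mul m.ρ (h * (t * h * t⁻¹)), map_mul m.ρ t t]
  generalize m.ρ (t * h * t⁻¹) = a' at *
  have e4 : m.ρ h * a' = 1 + (m.ρ h - 1) + (a' - 1) + (m.ρ h - 1) * (a' - 1) := by
    noncomm_ring
  rw [e4, ho]
  noncomm_ring

theorem main {t : H} (hP : Pick π t) (ht : t ^ 3 = 1)
    (hcov : ∀ g, π g = 1 ∨ π g = π t ∨ π g⁻¹ = π t) {x : H} (hx : π x = 1) :
    (x * t) ^ 3 = 1 := by
  have ht' : π t ^ 3 = 1 := by rw [← map_pow, ht, map_one]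
  have hE : ∀ y, π y = 1 → ∀ g, Commute y (g * y * g⁻¹) := fun y hy g =>
    step3 hP ht' hcov hy g
  obtain ⟨c, hct, hc⟩ := hP
    [fun c => c, fun c => x * c, fun c => t * c⁻¹ * t, fun c => x * (t * c⁻¹ * t)]
    (by simp) (by
      simp only [List.mem_cons, List.not_mem_nil, or_false, forall_eq_or_imp, forall_eq]
      refine ⟨?_, ?_, ?_, ?_⟩ <;>
      · refine ⟨fun a b hab => by simpa using hab, fun c hc => by simp [hx, hc]⟩)
  simp only [List.mem_cons, List.not_mem_nil, or_false, forall_eq_or_imp, forall_eq] at hc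
  obtain ⟨c1, c2, c3, c4⟩ := hc
  obtain ⟨d, hdt, hd⟩ := hP
    [fun d => d, fun d => x * d, fun d => c * t⁻¹ * d, fun d => x * (c * t⁻¹ * d)]
    (by simp) (by
      simp only [List.mem_cons, List.not_mem_nil, or_false, forall_eq_or_imp, forall_eq]
      refine ⟨?_, ?_, ?_, ?_⟩ <;>
      · refine ⟨fun a b hab => by simpa using hab, fun d hd => by simp [hx, hct, hd]⟩)
  simp only [List.mem_cons, List.not_mem_nil, or_false, forall_eq_or_imp, forall_eq] at hd
  obtain ⟨d1, d2, d3, d4⟩ := hd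
  obtain ⟨h, rfl⟩ : ∃ h, c = h * t := ⟨c * t⁻¹, by group⟩
  obtain ⟨k, rfl⟩ : ∃ k, d = k * t := ⟨d * t⁻¹, by group⟩
  have hh : π h = 1 := by simpa using hct
  have hk : π k = 1 := by simpa using hdt
  have r1 : t * (h * t)⁻¹ * t = h⁻¹ * t := by group
  have r2 : h * t * t⁻¹ * (k * t) = (h * k) * t := by group
  rw [r1] at c3 c4
  rw [r2] at d3 d4
  obtain ⟨A, _, ⟨m⟩⟩ := exists_module x (hE x hx)
  have E1 := m.expand hx hE hh c1 c2
  have E2 := m.expand hx hE (h := h⁻¹) (by simp [hh]) c3 c4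
  have E3 := m.expand hx hE hk d1 d2
  have E4 := m.expand hx hE (h := h * k) (by simp [hh, hk]) d3 d4
  have hh' : π (t * h * t⁻¹) = 1 := by simp [hh]
  have hk' : π (t * k * t⁻¹) = 1 := by simp [hk]
  have q1 : t * h⁻¹ * t⁻¹ = (t * h * t⁻¹)⁻¹ := by group
  have q2 : t * (h * k) * t⁻¹ = (t * h * t⁻¹) * (t * k * t⁻¹) := by group
  rw [q1, m.inv hx hE hh, m.inv hx hE hh'] at E2
  rw [q2, map_mul m.ρ h, map_mul m.ρ (t * h * t⁻¹)] at E4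
  have T1 := m.three hx hE hh hk
  have T2 := m.three hx hE hh' hk'
  generalize m.ρ (t * h * t⁻¹) = a' at *
  generalize m.ρ (t * k * t⁻¹) = b' at *
  generalize m.ρ h = a at *
  generalize m.ρ k = b at *
  set s := m.ρ t with hs
  set D := (1 + s + s * s) m.v with hD
  have D2 : D + D = 0 := by
    rw [← add_zero (0 : A)]
    nth_rewrite 1 [← E1]
    rw [← E2, hD]
    refine (DFunLike.congr_fun (F := AddMonoid.End A) (f := _ + _) (g := _ + _) ?_ m.v)
    noncomm_ring
  have D1 : D = ((a - 1) * (b - 1)) (s m.v) + ((a - 1) * (b - 1)) ((s * s) m.v)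
      + ((a' - 1) * (b' - 1)) ((s * s) m.v) := by
    have z : D = D + (0 - 0 - 0) + 0 := by simp
    have w : ((a - 1) * (b - 1)) (s m.v) + ((a - 1) * (b - 1)) ((s * s) m.v)
      + ((a' - 1) * (b' - 1)) ((s * s) m.v) = ((a - 1) * (b - 1) * s + (a - 1) * (b - 1) * (s * s)
      + (a' - 1) * (b' - 1) * (s * s)) m.v := rfl
    have E5 : ((a - 1) * (b - 1) * s + (a - 1) * (b - 1) * (s * s)
      + (a' - 1) * (b' - 1) * (s * s)) m.v - D = 0 - 0 - 0 := by
      nth_rewrite 1 [← E4]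
      nth_rewrite 1 [← E1]
      rw [← E3, hD]
      refine (DFunLike.congr_fun (F := AddMonoid.End A) (f := _ - _) (g := _ - _ - _) ?_ m.v)
      noncomm_ring
    rw [w]
    rw [sub_zero, sub_zero, sub_eq_zero] at E5
    exact E5.symm
  have D3 : (3 : ℕ) • D = 0 := by
    rw [D1, nsmul_add, nsmul_add, T1, T1, T2]; simp
  have D0 : D = 0 := by
    have : D = (3 : ℕ) • D - (D + D) := by
      rw [succ_nsmul, succ_nsmul, one_nsmul]; abel
    rw [this, D3, D2, sub_zero]
  have F := congrArg m.ι D0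
  have F1 : D = m.v + m.ρ t m.v + m.ρ (t * t) m.v := by rw [map_mul]; rfl
  rw [F1, m.add, m.add, m.act, m.act, m.gen, m.zero] at F
  have : (x * t) ^ 3 = x * (t * x * t⁻¹) * ((t * t) * x * (t * t)⁻¹) * t ^ 3 := by
    simp only [pow_succ, pow_zero, one_mul]; group
  rw [this, F, ht, one_mul]

end

lemma union_bound {G : Type*} [Fintype G] [DecidableEq G] (B : Finset G) (l : List (G → G))
    (hl : ∀ f ∈ l, Function.Injective f) :
    (Finset.univ.filter (fun g => ∃ f ∈ l, f g ∈ B)).card ≤ l.length * B.card := by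
  classical
  induction l with
  | nil => simp
  | cons f l ih =>
    have h1 : (Finset.univ.filter (fun g => f g ∈ B)).card ≤ B.card := by
      apply Finset.card_le_card_of_injOn f
      · intro g hg; simpa using hg
      · exact (hl f (by simp)).injOn
    have h2 := ih (fun f hf => hl f (by simp [hf]))
    have h3 : Finset.univ.filter (fun g => ∃ f' ∈ f :: l, f' g ∈ B) =
        Finset.univ.filter (fun g => f g ∈ B) ∪
          Finset.univ.filter (fun g => ∃ f ∈ l, f g ∈ B) := by
      ext g; simp
    rw [h3, List.length_cons, add_mul, one_mul, add_comm]
    exact (Finset.card_union_le _ _).trans (Nat.add_le_add h1 h2)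

theorem part_a (G : Type) [Group G] [Fintype G] (α : MulAut G) (hα : α ^ 3 = 1)
    (hc : (15 / 16 : ℝ) * Nat.card G < (Nat.card {x : G | x * α x * (α ^ 2) x = 1} : ℝ))
    (x : G) : x * α x * (α ^ 2) x = 1 := by
  classical
  let Q := Subgroup.zpowers α
  let _ : CommGroup Q := { Q.toGroup with mul_comm := fun p q => mul_comm' p q }
  let a : Q := ⟨α, Subgroup.mem_zpowers α⟩
  have ha : a ^ 3 = 1 := Subtype.ext hα
  let H := G ⋊[Q.subtype] Q
  let π : H →* Q := SemidirectProduct.rightHom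
  let t : H := SemidirectProduct.inr a
  have ht : t ^ 3 = 1 := by
    change (SemidirectProduct.inr a : H) ^ 3 = 1
    rw [← map_pow, ha, map_one]
  have hcube : ∀ g : G, ((⟨g, a⟩ : H) ^ 3 = 1) ↔ g * α g * (α ^ 2) g = 1 := by
    intro g
    have e : (⟨g, a⟩ : H) ^ 3 = ⟨g * α g * (α ^ 2) g, a ^ 3⟩ := by
      rw [pow_succ, pow_two]
      ext
      · rfl
      · rfl
    rw [e, ha]
    constructor
    · intro h; exact congrArg SemidirectProduct.left h
    · intro h; rw [h]; rfl
  let B : Finset G := Finset.univ.filter (fun g => ¬ (g * α g * (α ^ 2) g = 1))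
  have hB : 16 * B.card < Fintype.card G := by
    have h1 := Finset.card_filter_add_card_filter_not (s := (Finset.univ : Finset G))
      (fun g => g * α g * (α ^ 2) g = 1)
    have h2 : Nat.card {x : G | x * α x * (α ^ 2) x = 1} =
        (Finset.univ.filter (fun g : G => g * α g * (α ^ 2) g = 1)).card := by
      rw [Nat.card_eq_fintype_card, ← Set.toFinset_card]
      congr 1; ext g; simp
    rw [h2, Nat.card_eq_fintype_card] at hc
    rw [Finset.card_univ] at h1
    have h3 : (15 * Fintype.card G : ℝ) <
      16 * (Finset.univ.filter (fun g : G => g * α g * (α ^ 2) g = 1)).card := by linarith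
    have h4 : 15 * Fintype.card G <
      16 * (Finset.univ.filter (fun g : G => g * α g * (α ^ 2) g = 1)).card := by
      exact_mod_cast h3
    change 16 * (Finset.univ.filter (fun g => ¬ (g * α g * (α ^ 2) g = 1))).card < _
    omega
  have hP : Pick π t := by
    intro l hl hF
    let l' : List (G → G) := l.map (fun F g => (F ⟨g, a⟩).left)
    have hinj : ∀ f ∈ l', Function.Injective f := by
      intro f hf
      obtain ⟨F, hFl, rfl⟩ := List.mem_map.1 hf
      intro g g' hgg
      have r1 : (F ⟨g, a⟩).right = a := (hF F hFl).2 ⟨g, a⟩ rfl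
      have r2 : (F ⟨g', a⟩).right = a := (hF F hFl).2 ⟨g', a⟩ rfl
      have := (hF F hFl).1 (SemidirectProduct.ext hgg (r1.trans r2.symm))
      exact congrArg SemidirectProduct.left this
    have hu := union_bound B l' hinj
    have hlen : l'.length ≤ 16 := by simpa [l'] using hl
    have hlt : (Finset.univ.filter (fun g => ∃ f ∈ l', f g ∈ B)).card < Fintype.card G :=
      lt_of_le_of_lt (hu.trans (Nat.mul_le_mul_right _ hlen)) hB
    obtain ⟨g, hg⟩ : ∃ g, g ∉ Finset.univ.filter (fun g => ∃ f ∈ l', f g ∈ B) := by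
      by_contra! hcon
      rw [Finset.eq_univ_of_forall hcon, Finset.card_univ] at hlt
      exact lt_irrefl _ hlt
    refine ⟨⟨g, a⟩, rfl, fun F hFl => ?_⟩
    have r1 : (F ⟨g, a⟩).right = a := (hF F hFl).2 ⟨g, a⟩ rfl
    have e : F ⟨g, a⟩ = ⟨(F ⟨g, a⟩).left, a⟩ := SemidirectProduct.ext rfl r1
    rw [e, hcube]
    by_contra hne
    apply hg
    rw [Finset.mem_filter]
    refine ⟨Finset.mem_univ _, _, List.mem_map.2 ⟨F, hFl, rfl⟩, ?_⟩
    exact Finset.mem_filter.2 ⟨Finset.mem_univ _, hne⟩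
  have hcov : ∀ g, π g = 1 ∨ π g = π t ∨ π g⁻¹ = π t := by
    intro g
    have hπt : π t = a := rfl
    obtain ⟨k, hk⟩ := Subgroup.mem_zpowers_iff.1 (π g).2
    have hk' : π g = a ^ k := Subtype.ext hk.symm
    have ha' : a ^ (3 : ℤ) = 1 := by exact_mod_cast ha
    rw [map_inv, hπt, hk']
    have hmod : a ^ k = a ^ (k % 3) := by
      conv_lhs => rw [← Int.emod_add_mul_ediv k 3, zpow_add, zpow_mul, ha', one_zpow, mul_one]
    rw [hmod]
    have : k % 3 = 0 ∨ k % 3 = 1 ∨ k % 3 = 2 := by omega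
    rcases this with h | h | h <;> rw [h]
    · left; simp
    · right; left; simp
    · right; right
      rw [inv_eq_iff_mul_eq_one, ← ha', ← zpow_add_one]; rfl
  have hm := main hP ht hcov (x := SemidirectProduct.inl x) (by rfl)
  have e : (SemidirectProduct.inl x * t : H) = ⟨x, a⟩ := by
    apply SemidirectProduct.ext
    · change x * 1 = x
      exact mul_one x
    · change 1 * a = a
      exact one_mul a
  rw [e, hcube] at hm
  exact hm

end CThree

/-- (a) For every finite group `G` and automorphism `α` with `α ^ 3 = 1`,
if `|{x : x * x^α * x^{α²} = 1}| > (15/16) * |G|` then `x * x^α * x^{α²} = 1` for all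
`x ∈ G`.  (b) Consequently every ratio `|X_{3,φ}(H)| / |H|` different from `1` is at
most `15/16`, i.e. `c₃ ≤ 15/16`, and (c) `15/16 < 1`, so `c₃ < 1`. -/
theorem c_three_le_fifteen_sixteenths :
    (∀ (G : Type) [Group G] [Fintype G] (α : MulAut G), α ^ 3 = 1 →
      (15 / 16 : ℝ) * Nat.card G <
        (Nat.card {x : G | x * α x * (α ^ 2) x = 1} : ℝ) →
      ∀ x : G, x * α x * (α ^ 2) x = 1) ∧
    (∀ (H : Type) [Group H] [Fintype H] (φ : MulAut H), φ ^ 3 = 1 →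
      (Nat.card {x : H | x * φ x * (φ ^ 2) x = 1} : ℝ) / Nat.card H ≠ 1 →
      (Nat.card {x : H | x * φ x * (φ ^ 2) x = 1} : ℝ) / Nat.card H ≤ 15 / 16) ∧
    (15 / 16 : ℝ) < 1 := by
  refine ⟨CThree.part_a, ?_, by norm_num⟩
  intro H _ _ φ hφ hne
  by_contra! hlt
  have hpos : (0 : ℝ) < Nat.card H := by exact_mod_cast Nat.card_pos
  rw [lt_div_iff₀ hpos] at hlt
  have hall := CThree.part_a H φ hφ hlt
  apply hne
  have : {x : H | x * φ x * (φ ^ 2) x = 1} = Set.univ := Set.eq_univ_of_forall hall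
  rw [this, Nat.card_univ]
  exact div_self hpos.ne'
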